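/- Maximal views are unions of congruence classes (Lemma 'rpq-union-congruence-classes'): Let A be an NFA over β with finitely many states and let L_s be a language over α ⊕ β. If views V : α → Language β maximally capture the mapping ⟨L_s, L(A)⟩, then every view V(a) is a union of congruence classes of A; that is, for all a ∈ α and all words w, w' over β, if w ∈ V(a) and R_A(w') = R_A(w), then w' ∈ V(a). -/

import Mathlib

/-!
Saturate every view under the congruence of `A`: `saturate A V a` consists of all words with the
same transition relation as some word of `V a`. Words with equal transition relations act
identically on all sets of states, and this is preserved by concatenation, so every word of
`s[saturate A V]` acts on `A` like some word of `s[V]` (`exists_mem_subst_of_saturate`). Hence the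
saturated views still capture the mapping; as they contain `V`, maximality forces them to equal `V`.
-/

/-- Substituted letter: a source letter is replaced by its view, a target letter by itself. -/
def viewHat {α β : Type*} (V : α → Language β) : α ⊕ β → Language β
  | Sum.inl a => V a
  | Sum.inr b => {[b]}

/-- Substitution `s[V]` of views into a word over the combined alphabet. -/
def subst {α β : Type*} (V : α → Language β) (s : List (α ⊕ β)) : Language β :=
  (s.map (viewHat V)).prod

/-- Substitution `L_s[V]` of views into a source language. -/
def langSubst {α β : Type*} (V : α → Language β) (Ls : Language (α ⊕ β)) : Language β :=
  ⋃ s ∈ Ls, subst V s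

/-- Views `V` capture the mapping `⟨L_s, L_t⟩`. -/
def Captures {α β : Type*} (V : α → Language β) (Ls : Language (α ⊕ β))
    (Lt : Language β) : Prop :=
  langSubst V Ls ≤ Lt ∧ langSubst V Ls ≠ 0

/-- The transition relation of the word `w` on the NFA `A`. -/
def transRel {β σ : Type*} (A : NFA β σ) (w : List β) : Set (σ × σ) :=
  {pq | pq.2 ∈ A.evalFrom {pq.1} w}

/-- The congruence class of the word `w` for the NFA `A`. -/
def congClass {β σ : Type*} (A : NFA β σ) (w : List β) : Language β :=
  {w' | transRel A w' = transRel A w}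

/-- Views `V` maximally capture the mapping `⟨L_s, L_t⟩`. -/
def MaximallyCaptures {α β : Type*} (V : α → Language β) (Ls : Language (α ⊕ β))
    (Lt : Language β) : Prop :=
  Captures V Ls Lt ∧
    ¬ ∃ V' : α → Language β, Captures V' Ls Lt ∧
      (∀ a : α, V a ≤ V' a) ∧ (∃ a : α, V a ≠ V' a)

/-- The views obtained from `V` by closing each of them under equality of transition relations
in `A`. -/
def saturate {α β σ : Type*} (A : NFA β σ) (V : α → Language β) : α → Language β :=
  fun a => {w' | ∃ w ∈ V a, transRel A w' = transRel A w}

theorem le_saturate {α β σ : Type*} (A : NFA β σ) (V : α → Language β) (a : α) :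
    V a ≤ saturate A V a :=
  fun w hw => ⟨w, hw, rfl⟩

theorem evalFrom_eq_of_transRel_eq {β σ : Type*} (A : NFA β σ) {u v : List β}
    (h : transRel A u = transRel A v) (S : Set σ) : A.evalFrom S u = A.evalFrom S v := by
  ext q
  rw [NFA.mem_evalFrom_iff_exists, NFA.mem_evalFrom_iff_exists]
  have key : ∀ p, q ∈ A.evalFrom {p} u ↔ q ∈ A.evalFrom {p} v :=
    fun p => Set.ext_iff.mp h (p, q)
  simp only [key]

theorem viewHat_mono {α β : Type*} {V V' : α → Language β} (h : ∀ a, V a ≤ V' a)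
    (c : α ⊕ β) : viewHat V c ≤ viewHat V' c := by
  cases c with
  | inl a => exact h a
  | inr b => exact le_rfl

theorem subst_mono {α β : Type*} {V V' : α → Language β} (h : ∀ a, V a ≤ V' a)
    (s : List (α ⊕ β)) : subst V s ≤ subst V' s := by
  induction s with
  | nil => exact le_rfl
  | cons c s ih =>
    simp only [subst, List.map_cons, List.prod_cons] at ih ⊢
    exact mul_le_mul' (viewHat_mono h c) ih

theorem mem_langSubst {α β : Type*} {V : α → Language β} {Ls : Language (α ⊕ β)}
    {u : List β} : u ∈ langSubst V Ls ↔ ∃ s ∈ Ls, u ∈ subst V s := by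
  refine Set.mem_iUnion₂.trans ?_
  simp only [exists_prop]
  rfl

theorem exists_mem_viewHat_of_saturate {α β σ : Type*} (A : NFA β σ) (V : α → Language β)
    (c : α ⊕ β) {u : List β} (hu : u ∈ viewHat (saturate A V) c) :
    ∃ v ∈ viewHat V c, ∀ S, A.evalFrom S u = A.evalFrom S v := by
  cases c with
  | inl a =>
    obtain ⟨v, hv, h⟩ := hu
    exact ⟨v, hv, evalFrom_eq_of_transRel_eq A h⟩
  | inr b => exact ⟨u, hu, fun _ => rfl⟩

/-- Substituting the saturated views into a word produces no new behaviour of `A`. -/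
theorem exists_mem_subst_of_saturate {α β σ : Type*} (A : NFA β σ) (V : α → Language β)
    (s : List (α ⊕ β)) {u : List β} (hu : u ∈ subst (saturate A V) s) :
    ∃ v ∈ subst V s, ∀ S, A.evalFrom S u = A.evalFrom S v := by
  induction s generalizing u with
  | nil => exact ⟨u, hu, fun _ => rfl⟩
  | cons c s ih =>
    simp only [subst, List.map_cons, List.prod_cons] at hu ih ⊢
    obtain ⟨x, hx, y, hy, rfl⟩ := Language.mem_mul.mp hu
    obtain ⟨x', hx', ex⟩ := exists_mem_viewHat_of_saturate A V c hx
    obtain ⟨y', hy', ey⟩ := ih hy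
    refine ⟨x' ++ y', Language.append_mem_mul hx' hy', fun S => ?_⟩
    rw [NFA.evalFrom_append, NFA.evalFrom_append, ex, ey]

theorem captures_saturate {α β σ : Type*} (A : NFA β σ) (Ls : Language (α ⊕ β))
    (V : α → Language β) (h : Captures V Ls A.accepts) :
    Captures (saturate A V) Ls A.accepts := by
  obtain ⟨hle, hne⟩ := h
  constructor
  · intro u hu
    obtain ⟨s, hs, hus⟩ := mem_langSubst.mp hu
    obtain ⟨v, hv, e⟩ := exists_mem_subst_of_saturate A V s hus
    have hacc : v ∈ A.accepts := hle (mem_langSubst.mpr ⟨s, hs, hv⟩)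
    rw [NFA.mem_accepts] at hacc
    show u ∈ A.accepts
    rwa [NFA.mem_accepts, e]
  · obtain ⟨v, hv⟩ := Set.nonempty_iff_ne_empty.mpr hne
    obtain ⟨s, hs, hvs⟩ := mem_langSubst.mp hv
    have hmem : v ∈ langSubst (saturate A V) Ls :=
      mem_langSubst.mpr ⟨s, hs, subst_mono (le_saturate A V) s hvs⟩
    intro h0
    rw [h0] at hmem
    exact Language.notMem_zero v hmem

/-- Lemma "rpq-union-congruence-classes": if views `V` maximally capture `⟨L_s, L(A)⟩`
for an NFA `A` with finitely many states, then every view `V a` is a union of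
congruence classes of `A`. -/
theorem rpq_union_congruence_classes {α β σ : Type*} [Fintype σ] (A : NFA β σ)
    (Ls : Language (α ⊕ β)) (V : α → Language β)
    (hV : MaximallyCaptures V Ls A.accepts) :
    ∀ a : α, ∀ w w' : List β, w ∈ V a → transRel A w' = transRel A w → w' ∈ V a := by
  intro a w w' hw h
  have heq : V a = saturate A V a := by
    by_contra hne
    exact hV.2 ⟨saturate A V, captures_saturate A Ls V hV.1, le_saturate A V, a, hne⟩
  rw [heq]
  exact ⟨w, hw, h⟩
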